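/- The number of regions of the Shi arrangement S_n in R^n equals (n+1)^(n-1). -/

import Mathlib

/-!
The number of regions of an arrangement and the number of points of its complement over `𝔽_p`, for
large `p`, both satisfy deletion–restriction: adding a hyperplane `H` to `A` increases the number of
regions by the number of regions of the restriction of `A` to `H`, and decreases the number of
points by the number of points of that restriction. Hence the points are counted by a polynomial
`χ(p)`, and an arrangement in `ℝⁿ` has `(-1)ⁿ χ(-1)` regions.

A point off the Shi arrangement over `𝔽_p` is a placement of `n` labels on distinct places of a
circle of length `p` such that no label is followed immediately by a smaller one. Place the smallest
label in one of `p` ways; the place in front of it stays empty, and what remains is a line of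
`p - 2` places for the other `n - 1` labels. Insert these in increasing order, creating a new place
for each one. The largest label so far goes anywhere except immediately in front of another label,
so each of the insertions has `p - n` outcomes. Hence `χ(p) = p (p - n)ⁿ⁻¹`, and
`(-1)ⁿ χ(-1) = (n + 1)ⁿ⁻¹`.
-/

open Filter Polynomial Set Topology

theorem card_connectedComponents_eq_ncard_range {X Y : Type*} [TopologicalSpace X]
    {g : X → Y} (hg : IsLocallyConstant g) (hfiber : ∀ x, IsPreconnected {y | g y = g x}) :
    Nat.card (ConnectedComponents X) = (range g).ncard := by
  let _ : TopologicalSpace Y := ⊥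
  have : DiscreteTopology Y := ⟨rfl⟩
  have lift_injective : Function.Injective hg.continuous.connectedComponentsLift := by
    intro a b hab
    obtain ⟨x, rfl⟩ := ConnectedComponents.surjective_coe a
    obtain ⟨y, rfl⟩ := ConnectedComponents.surjective_coe b
    exact ConnectedComponents.coe_eq_coe'.2 ((hfiber y).subset_connectedComponent rfl hab)
  rw [← hg.continuous.connectedComponentsLift_comp_coe,
    ConnectedComponents.surjective_coe.range_comp, ← image_univ,
    ncard_image_of_injective _ lift_injective, ncard_univ]

namespace HyperplaneArrangement

section Complement

variable {K E : Type*} [Ring K] [AddCommGroup E] [Module K E]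

/-- The complement of the arrangement whose hyperplanes are the zero sets of the affine functionals
in `A`. Constant functionals are allowed, since they arise when an arrangement is restricted to one
of its hyperplanes. -/
def complement (A : List (E →ᵃ[K] K)) : Set E :=
  {x | ∀ f ∈ A, f x ≠ 0}

theorem complement_cons (f : E →ᵃ[K] K) (A : List (E →ᵃ[K] K)) :
    complement (f :: A) = complement A \ f ⁻¹' {0} := by
  ext x
  simp only [complement, List.forall_mem_cons, mem_ofPred_eq, Set.mem_sdiff, mem_preimage,
    mem_singleton_iff, and_comm, ne_eq]

theorem ncard_complement_cons_add [Finite E] (f : E →ᵃ[K] K) (A : List (E →ᵃ[K] K)) :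
    (complement (f :: A)).ncard + (complement A ∩ f ⁻¹' {0}).ncard = (complement A).ncard := by
  rw [complement_cons, add_comm, ncard_inter_add_ncard_sdiff_eq_ncard]

end Complement

section Topes

variable {E : Type*} [AddCommGroup E] [Module ℝ E]

/-- The position of `x` relative to each of the hyperplanes of `A`. -/
noncomputable def signVector (A : List (E →ᵃ[ℝ] ℝ)) (x : E) : List SignType :=
  A.map fun f ↦ SignType.sign (f x)

/-- The sign vectors of the points of `S` off the hyperplanes of `A`. In the language of oriented
matroids, these are the topes of `A` that meet `S`. -/
noncomputable def topes (A : List (E →ᵃ[ℝ] ℝ)) (S : Set E) : Set (List SignType) :=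
  signVector A '' (complement A ∩ S)

theorem signVector_eq_signVector_iff {A : List (E →ᵃ[ℝ] ℝ)} {x y : E} :
    signVector A x = signVector A y ↔ ∀ f ∈ A, SignType.sign (f x) = SignType.sign (f y) :=
  List.map_inj_left

theorem mem_complement_iff_zero_notMem_signVector {A : List (E →ᵃ[ℝ] ℝ)} {x : E} :
    x ∈ complement A ↔ 0 ∉ signVector A x := by
  simp [complement, signVector]

theorem mem_complement_of_signVector_eq {A : List (E →ᵃ[ℝ] ℝ)} {x y : E}
    (h : signVector A y = signVector A x) (hx : x ∈ complement A) : y ∈ complement A := by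
  rw [mem_complement_iff_zero_notMem_signVector] at hx ⊢
  rwa [h]

theorem convex_face (A : List (E →ᵃ[ℝ] ℝ)) (x : E) :
    Convex ℝ {y | signVector A y = signVector A x} := by
  simp only [signVector_eq_signVector_iff, ofPred_forall]
  exact convex_iInter₂ fun f _ ↦
    (ordConnected_singleton.preimage_mono SignType.sign.monotone).convex.affine_preimage f

theorem finite_topes (A : List (E →ᵃ[ℝ] ℝ)) (S : Set E) : (topes A S).Finite := by
  refine (List.finite_length_eq SignType A.length).subset ?_
  rintro _ ⟨x, -, rfl⟩
  exact List.length_map _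

theorem topes_union (A : List (E →ᵃ[ℝ] ℝ)) (S T : Set E) :
    topes A (S ∪ T) = topes A S ∪ topes A T := by
  simp only [topes, inter_union_distrib_left, image_union]

theorem topes_cons (f : E →ᵃ[ℝ] ℝ) (A : List (E →ᵃ[ℝ] ℝ)) :
    topes (f :: A) univ = List.cons 1 '' topes A (f ⁻¹' Ioi 0) ∪
      List.cons (-1) '' topes A (f ⁻¹' Iio 0) := by
  have sides : complement (f :: A) =
      complement A ∩ f ⁻¹' Ioi 0 ∪ complement A ∩ f ⁻¹' Iio 0 := by
    rw [complement_cons, ← inter_union_distrib_left, ← preimage_union, union_comm,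
      Iio_union_Ioi, preimage_compl, sdiff_eq]
  rw [topes, inter_univ, sides, image_union, topes, topes, image_image, image_image]
  congr 1
  · exact image_congr fun x hx ↦ congrArg (· :: signVector A x) (sign_pos hx.2)
  · exact image_congr fun x hx ↦ congrArg (· :: signVector A x) (sign_neg hx.2)

theorem ncard_topes_cons (f : E →ᵃ[ℝ] ℝ) (A : List (E →ᵃ[ℝ] ℝ)) :
    (topes (f :: A) univ).ncard =
      (topes A (f ⁻¹' Ioi 0)).ncard + (topes A (f ⁻¹' Iio 0)).ncard := by
  have disjoint_sides : Disjoint (List.cons (1 : SignType) '' topes A (f ⁻¹' Ioi 0))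
      (List.cons (-1) '' topes A (f ⁻¹' Iio 0)) := by
    rw [disjoint_left]
    rintro _ ⟨σ, -, rfl⟩ ⟨τ, -, h⟩
    exact absurd (List.head_eq_of_cons_eq h) (by decide)
  rw [topes_cons, ncard_union_eq disjoint_sides ((finite_topes _ _).image _)
    ((finite_topes _ _).image _), ncard_image_of_injective _ List.cons_injective,
    ncard_image_of_injective _ List.cons_injective]

end Topes

section Topology

variable {E : Type*} [NormedAddCommGroup E] [NormedSpace ℝ E] [FiniteDimensional ℝ E]

/-- The number of regions of the arrangement `A`, that is, of connected components of its
complement. -/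
noncomputable def regionCount (A : List (E →ᵃ[ℝ] ℝ)) : ℕ :=
  Nat.card (ConnectedComponents (complement A))

theorem eventually_signVector_eq {A : List (E →ᵃ[ℝ] ℝ)} {x : E} (hx : x ∈ complement A) :
    ∀ᶠ y in 𝓝 x, signVector A y = signVector A x := by
  simp only [signVector_eq_signVector_iff]
  refine (eventually_all_finite A.finite_toSet).2 fun f hf ↦ ?_
  exact tendsto_pure.1 <| (nhds_discrete SignType) ▸
    (continuousAt_sign_of_ne_zero (hx f hf)).comp f.continuous_of_finiteDimensional.continuousAt

theorem regionCount_eq_ncard_topes (A : List (E →ᵃ[ℝ] ℝ)) :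
    regionCount A = (topes A univ).ncard := by
  have locallyConstant : IsLocallyConstant fun x : complement A ↦ signVector A x :=
    (IsLocallyConstant.iff_eventually_eq _).2 fun x ↦
      continuous_subtype_val.continuousAt.eventually (eventually_signVector_eq x.2)
  rw [regionCount, card_connectedComponents_eq_ncard_range locallyConstant fun x ↦ ?_, topes,
    inter_univ, image_eq_range]
  have face_subset : {y | signVector A y = signVector A x} ⊆ range ((↑) : complement A → E) := by
    rw [Subtype.range_coe]
    exact fun y hy ↦ mem_complement_of_signVector_eq hy x.2
  rw [← Topology.IsInducing.subtypeVal.isPreconnected_image]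
  convert (convex_face A (x : E)).isPreconnected
  exact image_preimage_eq_of_subset face_subset

theorem topes_preimage_zero_subset (A : List (E →ᵃ[ℝ] ℝ)) {f : E →ᵃ[ℝ] ℝ}
    (hf : Function.Surjective f) {T : Set ℝ} (hT : 0 ∈ closure T) :
    topes A (f ⁻¹' {0}) ⊆ topes A (f ⁻¹' T) := by
  rintro _ ⟨x, ⟨hxA, hx⟩, rfl⟩
  have isOpenMap : IsOpenMap f := AffineMap.isOpenMap_linear_iff.1
    (f.linear.isOpenMap_of_finiteDimensional (f.linear_surjective_iff.2 hf))
  have image_face_mem_nhds : f '' {y | signVector A y = signVector A x} ∈ 𝓝 0 := by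
    simpa only [show f x = 0 from hx] using
      isOpenMap.image_mem_nhds (eventually_signVector_eq hxA)
  obtain ⟨_, ⟨y, hy, rfl⟩, hyT⟩ := mem_closure_iff_nhds.1 hT _ image_face_mem_nhds
  exact ⟨y, ⟨mem_complement_of_signVector_eq hy hxA, hyT⟩, hy⟩

theorem topes_pos_union_neg (A : List (E →ᵃ[ℝ] ℝ)) {f : E →ᵃ[ℝ] ℝ}
    (hf : Function.Surjective f) :
    topes A (f ⁻¹' Ioi 0) ∪ topes A (f ⁻¹' Iio 0) = topes A univ := by
  have zero_subset : topes A (f ⁻¹' {0}) ⊆ topes A (f ⁻¹' Ioi 0) :=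
    topes_preimage_zero_subset A hf (by simp)
  have univ_eq : (univ : Set E) = f ⁻¹' {0} ∪ (f ⁻¹' Ioi 0 ∪ f ⁻¹' Iio 0) := by
    rw [← preimage_union, ← preimage_union, union_comm (Ioi 0), Iio_union_Ioi, union_compl_self,
      preimage_univ]
  rw [univ_eq, topes_union A (f ⁻¹' {0}), topes_union,
    union_eq_self_of_subset_left (zero_subset.trans subset_union_left)]

theorem topes_pos_inter_neg (A : List (E →ᵃ[ℝ] ℝ)) {f : E →ᵃ[ℝ] ℝ}
    (hf : Function.Surjective f) :
    topes A (f ⁻¹' Ioi 0) ∩ topes A (f ⁻¹' Iio 0) = topes A (f ⁻¹' {0}) := by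
  apply Subset.antisymm
  · rintro _ ⟨⟨x, ⟨hxA, hx⟩, rfl⟩, ⟨y, ⟨-, hy⟩, hyx⟩⟩
    obtain ⟨z, hzx, hz⟩ := (convex_face A x).isPreconnected.intermediate_value hyx rfl
      f.continuous_of_finiteDimensional.continuousOn ⟨le_of_lt hy, le_of_lt hx⟩
    exact ⟨z, ⟨mem_complement_of_signVector_eq hzx hxA, hz⟩, hzx⟩
  · exact subset_inter (topes_preimage_zero_subset A hf (by simp))
      (topes_preimage_zero_subset A hf (by simp))

theorem regionCount_cons (A : List (E →ᵃ[ℝ] ℝ)) {f : E →ᵃ[ℝ] ℝ}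
    (hf : Function.Surjective f) :
    regionCount (f :: A) = regionCount A + (topes A (f ⁻¹' {0})).ncard := by
  rw [regionCount_eq_ncard_topes, regionCount_eq_ncard_topes, ncard_topes_cons,
    ← ncard_union_add_ncard_inter _ _ (finite_topes _ _) (finite_topes _ _),
    topes_pos_union_neg A hf, topes_pos_inter_neg A hf]

end Topology

/-- An affine form `∑ i, coeff i * x i + const` with integer coefficients; such a form can be
evaluated over `ℝ` and over every finite field. -/
structure IntegralForm (n : ℕ) where
  coeff : Fin n → ℤ
  const : ℤ

namespace IntegralForm

variable {n : ℕ}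

section CommRing

variable {K : Type*} [CommRing K]

variable (K) in
/-- The affine functional on `Kⁿ` given by an integral form. -/
def eval (H : IntegralForm n) : (Fin n → K) →ᵃ[K] K :=
  (Fintype.linearCombination K fun i ↦ (H.coeff i : K)).toAffineMap +
    AffineMap.const K (Fin n → K) (H.const : K)

theorem eval_apply (H : IntegralForm n) (x : Fin n → K) :
    H.eval K x = ∑ i, H.coeff i * x i + H.const := by
  simp [eval, Fintype.linearCombination_apply, mul_comm]

theorem eval_eq_const {H : IntegralForm n} (hH : H.coeff = 0) (x : Fin n → K) :
    H.eval K x = H.const := by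
  simp [eval_apply, hH]

theorem eval_succAbove (H : IntegralForm (n + 1)) (i : Fin (n + 1)) (x : Fin (n + 1) → K) :
    H.eval K x =
      H.coeff i * x i + (∑ k, H.coeff (i.succAbove k) * i.removeNth x k + H.const) := by
  rw [eval_apply, Fin.sum_univ_succAbove _ i, add_assoc]
  rfl

/-- The restriction of `G` to the hyperplane `H = 0`, on which the coordinates other than the `i`-th
are used as affine coordinates. The form `G - (G.coeff i / H.coeff i) * H`, in which the `i`-th
coordinate is eliminated, is multiplied by `H.coeff i ^ 2` in order to clear the denominator without
changing signs. -/
def restrict (H : IntegralForm (n + 1)) (i : Fin (n + 1)) (G : IntegralForm (n + 1)) :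
    IntegralForm n where
  coeff k := H.coeff i ^ 2 * G.coeff (i.succAbove k) -
    H.coeff i * G.coeff i * H.coeff (i.succAbove k)
  const := H.coeff i ^ 2 * G.const - H.coeff i * G.coeff i * H.const

theorem eval_restrict_removeNth (H G : IntegralForm (n + 1)) (i : Fin (n + 1))
    {x : Fin (n + 1) → K} (hx : H.eval K x = 0) :
    (H.restrict i G).eval K (i.removeNth x) = (H.coeff i : K) ^ 2 * G.eval K x := by
  have sum_eq : ∑ k, ((H.restrict i G).coeff k : K) * i.removeNth x k =
      (H.coeff i : K) ^ 2 * ∑ k, G.coeff (i.succAbove k) * i.removeNth x k -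
        H.coeff i * G.coeff i * ∑ k, H.coeff (i.succAbove k) * i.removeNth x k := by
    rw [Finset.mul_sum, Finset.mul_sum, ← Finset.sum_sub_distrib]
    refine Finset.sum_congr rfl fun k _ ↦ ?_
    push_cast [restrict]
    ring
  rw [eval_succAbove H i] at hx
  rw [eval_apply, sum_eq, eval_succAbove G i]
  push_cast [restrict]
  linear_combination (-(H.coeff i * G.coeff i : K)) * hx

theorem complement_cons_of_const_eq_zero {H : IntegralForm n} (hcoeff : H.coeff = 0)
    (hconst : H.const = 0) (A : List (IntegralForm n)) :
    complement ((H :: A).map (eval K)) = ∅ := by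
  rw [List.map_cons, complement_cons, sdiff_eq_empty]
  intro x _
  simp [eval_eq_const hcoeff, hconst]

theorem complement_cons_of_const_ne_zero {H : IntegralForm n} (hcoeff : H.coeff = 0)
    (hconst : (H.const : K) ≠ 0) (A : List (IntegralForm n)) :
    complement ((H :: A).map (eval K)) = complement (A.map (eval K)) := by
  have preimage_eq_empty : H.eval K ⁻¹' {0} = ∅ := by
    ext x
    simp [eval_eq_const hcoeff, hconst]
  rw [List.map_cons, complement_cons, preimage_eq_empty, sdiff_empty]

end CommRing

section Field

variable {K : Type*} [Field K]

theorem bijOn_removeNth {H : IntegralForm (n + 1)} {i : Fin (n + 1)}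
    (hi : (H.coeff i : K) ≠ 0) : BijOn i.removeNth (H.eval K ⁻¹' {0}) univ := by
  refine ⟨mapsTo_univ _ _, fun x hx y hy hxy ↦ ?_, fun y _ ↦ ?_⟩
  · have eval_eq : H.eval K x = H.eval K y := hx.trans hy.symm
    rw [eval_succAbove H i, eval_succAbove H i, hxy, add_left_inj] at eval_eq
    rw [← i.insertNth_self_removeNth x, ← i.insertNth_self_removeNth y, hxy,
      mul_left_cancel₀ hi eval_eq]
  · refine ⟨i.insertNth (-(∑ k, H.coeff (i.succAbove k) * y k + H.const) / (H.coeff i : K)) y,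
      ?_, i.removeNth_insertNth (α := fun _ ↦ K) _ y⟩
    rw [mem_preimage, mem_singleton_iff, eval_succAbove H i, Fin.insertNth_apply_same,
      Fin.removeNth_insertNth]
    field_simp
    ring

theorem bijOn_removeNth_complement (A : List (IntegralForm (n + 1))) {H : IntegralForm (n + 1)}
    {i : Fin (n + 1)} (hi : (H.coeff i : K) ≠ 0) :
    BijOn i.removeNth (complement (A.map (eval K)) ∩ H.eval K ⁻¹' {0})
      (complement ((A.map (H.restrict i)).map (eval K))) := by
  convert (bijOn_removeNth hi).subset_right (subset_univ _) using 1
  rw [inter_comm]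
  ext x
  refine and_congr_right fun hx ↦ ?_
  simp only [complement, mem_preimage, mem_ofPred_eq, List.forall_mem_map,
    eval_restrict_removeNth H _ i hx, ne_eq, mul_eq_zero, pow_eq_zero_iff two_ne_zero, hi, false_or]

theorem eval_surjective {H : IntegralForm n} {i : Fin n} (hi : (H.coeff i : K) ≠ 0) :
    Function.Surjective (H.eval K) := by
  intro c
  refine ⟨Pi.single i ((c - H.const) / H.coeff i), ?_⟩
  simp [eval_apply, Pi.single_apply, mul_div_cancel₀ _ hi]

theorem ncard_complement_cons_of_coeff_ne_zero [Finite K] (A : List (IntegralForm (n + 1)))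
    {H : IntegralForm (n + 1)} {i : Fin (n + 1)} (hi : (H.coeff i : K) ≠ 0) :
    (complement ((H :: A).map (eval K))).ncard +
        (complement ((A.map (H.restrict i)).map (eval K))).ncard =
      (complement (A.map (eval K))).ncard := by
  rw [← (bijOn_removeNth_complement A hi).ncard_eq]
  exact ncard_complement_cons_add _ _

end Field

theorem regionCount_cons_of_coeff_ne_zero (A : List (IntegralForm (n + 1)))
    {H : IntegralForm (n + 1)} {i : Fin (n + 1)} (hi : H.coeff i ≠ 0) :
    regionCount ((H :: A).map (eval ℝ)) =
      regionCount (A.map (eval ℝ)) + regionCount ((A.map (H.restrict i)).map (eval ℝ)) := by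
  have hi' : (H.coeff i : ℝ) ≠ 0 := Int.cast_ne_zero.2 hi
  have signVector_restrict : ∀ x ∈ H.eval ℝ ⁻¹' {0},
      signVector ((A.map (H.restrict i)).map (eval ℝ)) (i.removeNth x) =
        signVector (A.map (eval ℝ)) x := by
    intro x hx
    simp only [signVector, List.map_map]
    refine List.map_congr_left fun G _ ↦ ?_
    simp only [Function.comp_apply]
    rw [eval_restrict_removeNth H G i hx, sign_mul, sign_pos (by positivity), one_mul]
  have topes_restrict : topes ((A.map (H.restrict i)).map (eval ℝ)) univ =
      topes (A.map (eval ℝ)) (H.eval ℝ ⁻¹' {0}) := by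
    rw [topes, inter_univ, ← (bijOn_removeNth_complement A hi').image_eq, image_image]
    exact image_congr fun x hx ↦ signVector_restrict x hx.2
  rw [List.map_cons, regionCount_cons _ (eval_surjective hi'),
    regionCount_eq_ncard_topes ((A.map (H.restrict i)).map (eval ℝ)), topes_restrict]

/-- The polynomial `χ` counts the points of the complement of `A` over `𝔽_p` for all large primes
`p`. By the finite field method this determines `χ` as the characteristic polynomial of `A`. -/
def IsCharPoly (A : List (IntegralForm n)) (χ : ℤ[X]) : Prop :=
  ∀ᶠ p : ℕ in atTop, p.Prime →
    ((complement (A.map (eval (ZMod p)))).ncard : ℤ) = χ.eval (p : ℤ)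

theorem eventually_intCast_zmod_ne_zero {c : ℤ} (hc : c ≠ 0) :
    ∀ᶠ p : ℕ in atTop, (c : ZMod p) ≠ 0 := by
  filter_upwards [eventually_gt_atTop c.natAbs] with p hp h
  rw [ZMod.intCast_zmod_eq_zero_iff_dvd, Int.natCast_dvd] at h
  exact hp.not_ge (Nat.le_of_dvd (Int.natAbs_pos.2 hc) h)

namespace IsCharPoly

theorem eq {A : List (IntegralForm n)} {χ ψ : ℤ[X]} (hχ : IsCharPoly A χ)
    (hψ : IsCharPoly A ψ) : χ = ψ := by
  have agree : ∃ᶠ p : ℕ in atTop, χ.eval (p : ℤ) = ψ.eval (p : ℤ) :=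
    ((Nat.frequently_atTop_iff_infinite.2 Nat.infinite_setOfPred_prime).and_eventually
      (hχ.and hψ)).mono fun p ⟨hp, hχp, hψp⟩ ↦ (hχp hp).symm.trans (hψp hp)
  refine Polynomial.eq_of_infinite_eval_eq _ _ <|
    ((Nat.frequently_atTop_iff_infinite.1 agree).image Nat.cast_injective.injOn).mono ?_
  rintro _ ⟨p, hp, rfl⟩
  exact hp

theorem nil : IsCharPoly ([] : List (IntegralForm n)) (X ^ n) := by
  filter_upwards [eventually_ne_atTop 0] with p hp _
  have : NeZero p := ⟨hp⟩
  simp [complement, ncard_univ]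

theorem cons_of_coeff_ne_zero {A : List (IntegralForm (n + 1))} {H : IntegralForm (n + 1)}
    {i : Fin (n + 1)} (hi : H.coeff i ≠ 0) {χ ψ : ℤ[X]} (hχ : IsCharPoly A χ)
    (hψ : IsCharPoly (A.map (H.restrict i)) ψ) : IsCharPoly (H :: A) (χ - ψ) := by
  filter_upwards [hχ, hψ, eventually_intCast_zmod_ne_zero hi] with p hχp hψp hip hp
  have : Fact p.Prime := ⟨hp⟩
  rw [eval_sub, ← hχp hp, ← hψp hp, ← ncard_complement_cons_of_coeff_ne_zero A hip]
  push_cast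
  ring

theorem cons_of_const_eq_zero {H : IntegralForm n} (hcoeff : H.coeff = 0) (hconst : H.const = 0)
    (A : List (IntegralForm n)) : IsCharPoly (H :: A) 0 := by
  refine Eventually.of_forall fun p _ ↦ ?_
  rw [complement_cons_of_const_eq_zero hcoeff hconst, ncard_empty, eval_zero, Nat.cast_zero]

theorem cons_of_const_ne_zero {A : List (IntegralForm n)} {H : IntegralForm n}
    (hcoeff : H.coeff = 0) (hconst : H.const ≠ 0) {χ : ℤ[X]} (hχ : IsCharPoly A χ) :
    IsCharPoly (H :: A) χ := by
  filter_upwards [hχ, eventually_intCast_zmod_ne_zero hconst] with p hχp hconstp hp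
  rw [complement_cons_of_const_ne_zero hcoeff hconstp, hχp hp]

end IsCharPoly

theorem exists_isCharPoly_and_regionCount_eq (A : List (IntegralForm n)) :
    ∃ χ, IsCharPoly A χ ∧ (regionCount (A.map (eval ℝ)) : ℤ) = (-1) ^ n * χ.eval (-1) := by
  induction hm : A.length generalizing n A with
  | zero =>
    obtain rfl := List.eq_nil_of_length_eq_zero hm
    refine ⟨X ^ n, .nil, ?_⟩
    simp [regionCount_eq_ncard_topes, topes, complement, signVector, ← mul_pow]
  | succ m ih =>
    obtain ⟨H, A, rfl⟩ := List.exists_cons_of_length_eq_add_one hm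
    obtain ⟨χ, hχ, regionCount_A⟩ := ih A (Nat.succ.inj hm)
    by_cases hcoeff : H.coeff = 0
    · by_cases hconst : H.const = 0
      · refine ⟨0, .cons_of_const_eq_zero hcoeff hconst A, ?_⟩
        rw [regionCount_eq_ncard_topes, topes, complement_cons_of_const_eq_zero hcoeff hconst]
        simp
      · refine ⟨χ, .cons_of_const_ne_zero hcoeff hconst hχ, ?_⟩
        rwa [regionCount,
          complement_cons_of_const_ne_zero hcoeff (Int.cast_ne_zero.2 hconst)]
    · obtain ⟨i, hi⟩ := Function.ne_iff.1 hcoeff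
      obtain _ | n := n
      · exact i.elim0
      obtain ⟨ψ, hψ, regionCount_restrict⟩ :=
        ih (A.map (H.restrict i)) ((List.length_map _).trans (Nat.succ.inj hm))
      refine ⟨χ - ψ, .cons_of_coeff_ne_zero hi hχ hψ, ?_⟩
      rw [regionCount_cons_of_coeff_ne_zero A hi, Nat.cast_add, regionCount_A,
        regionCount_restrict, eval_sub]
      ring

theorem IsCharPoly.regionCount_eq {A : List (IntegralForm n)} {χ : ℤ[X]}
    (hχ : IsCharPoly A χ) : (regionCount (A.map (eval ℝ)) : ℤ) = (-1) ^ n * χ.eval (-1) := by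
  obtain ⟨ψ, hψ, regionCount_A⟩ := exists_isCharPoly_and_regionCount_eq A
  rwa [hχ.eq hψ]

end IntegralForm

section Shi

variable {n m : ℕ}

/-- The integral form `x i - x j - c`. -/
def differenceForm (i j : Fin n) (c : ℤ) : IntegralForm n where
  coeff := Pi.single i 1 - Pi.single j 1
  const := -c

theorem eval_differenceForm {K : Type*} [CommRing K] (i j : Fin n) (c : ℤ)
    (x : Fin n → K) : (differenceForm i j c).eval K x = x i - x j - c := by
  simp [IntegralForm.eval_apply, differenceForm, Pi.single_apply, sub_mul, ← sub_eq_add_neg]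

/-- The Shi arrangement `S_n`. -/
noncomputable def shi (n : ℕ) : List (IntegralForm n) :=
  (Finset.univ.filter fun p : Fin n × Fin n ↦ p.1 < p.2).toList.flatMap fun p ↦
    [differenceForm p.1 p.2 0, differenceForm p.1 p.2 1]

theorem mem_shi {H : IntegralForm n} :
    H ∈ shi n ↔ ∃ i j, i < j ∧ (H = differenceForm i j 0 ∨ H = differenceForm i j 1) := by
  simp [shi]

theorem complement_shi (n : ℕ) (K : Type*) [CommRing K] :
    complement ((shi n).map (IntegralForm.eval K)) =
      {x | ∀ i j, i < j → x i - x j ≠ 0 ∧ x i - x j ≠ 1} := by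
  ext x
  simp only [complement, mem_ofPred_eq, List.forall_mem_map, mem_shi]
  constructor
  · intro hx i j hij
    constructor
    · simpa [eval_differenceForm] using hx _ ⟨i, j, hij, .inl rfl⟩
    · simpa [eval_differenceForm, sub_eq_zero] using hx _ ⟨i, j, hij, .inr rfl⟩
  · rintro hx _ ⟨i, j, hij, rfl | rfl⟩
    · simpa [eval_differenceForm] using (hx i j hij).1
    · simpa [eval_differenceForm, sub_eq_zero] using (hx i j hij).2

/-- The labels `0, …, n - 1` are placed on distinct places of the line `0, …, m - 1`, the label `i`
on the place `y i`, in such a way that no label is followed immediately by a smaller one. -/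
def IsShiPlacement (y : Fin n → Fin m) : Prop :=
  ∀ i j, i < j → y i ≠ y j ∧ (y i : ℕ) ≠ y j + 1

theorem IsShiPlacement.injective {y : Fin n → Fin m} (hy : IsShiPlacement y) :
    Function.Injective y :=
  .of_lt_imp_ne fun i j hij ↦ (hy i j hij).1

theorem val_succAbove_eq_add_one_iff {e : Fin (m + 1)} {a b : Fin m}
    (ha : a.castSucc ≠ e) : (e.succAbove a : ℕ) = e.succAbove b + 1 ↔ (a : ℕ) = b + 1 := by
  have val_ne := Fin.val_ne_iff.2 ha
  simp only [Fin.succAbove, Fin.lt_def]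
  split_ifs <;> simp only [Fin.val_castSucc, Fin.val_succ] at * <;> omega

theorem val_succAbove_eq_val_add_one_iff {e : Fin (m + 1)} {a : Fin m} :
    (e.succAbove a : ℕ) = e + 1 ↔ a.castSucc = e := by
  simp only [Fin.succAbove, Fin.lt_def, Fin.ext_iff]
  split_ifs <;> simp only [Fin.val_castSucc, Fin.val_succ] at * <;> omega

/-- The placement obtained from `y` by inserting a new place `e` and a new largest label on it. -/
def insertLargest (e : Fin (m + 1)) (y : Fin n → Fin m) : Fin (n + 1) → Fin (m + 1) :=
  Fin.snoc (α := fun _ ↦ Fin (m + 1)) (e.succAbove ∘ y) e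

theorem insertLargest_inj {e f : Fin (m + 1)} {y z : Fin n → Fin m} :
    insertLargest e y = insertLargest f z ↔ e = f ∧ y = z := by
  refine ⟨fun h ↦ ?_, fun h ↦ by rw [h.1, h.2]⟩
  obtain ⟨succAbove_comp_eq, rfl⟩ := Fin.snoc_inj.1 h
  exact ⟨rfl, Fin.succAbove_right_injective.comp_left succAbove_comp_eq⟩

theorem isShiPlacement_insertLargest_iff {e : Fin (m + 1)} {y : Fin n → Fin m} :
    IsShiPlacement (insertLargest e y) ↔ IsShiPlacement y ∧ e ∉ range (Fin.castSucc ∘ y) := by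
  have castSucc_cases : IsShiPlacement (insertLargest e y) ↔
      (∀ i j, i < j → y i ≠ y j ∧ (e.succAbove (y i) : ℕ) ≠ e.succAbove (y j) + 1) ∧
        ∀ i, (y i).castSucc ≠ e := by
    simp [IsShiPlacement, insertLargest, Fin.forall_fin_succ', val_succAbove_eq_val_add_one_iff,
      Fin.succAbove_ne, forall_and, Fin.castSucc_lt_last, Fin.not_lt.2 (Fin.le_last _), and_assoc]
  rw [castSucc_cases, mem_range, not_exists]
  refine and_congr_left fun he ↦ ?_
  simp only [IsShiPlacement, ne_eq, val_succAbove_eq_add_one_iff (he _)]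

theorem IsShiPlacement.exists_insertLargest_eq {z : Fin (n + 1) → Fin (m + 1)}
    (hz : IsShiPlacement z) : ∃ e y, insertLargest e y = z := by
  have ne_last (i : Fin n) : z i.castSucc ≠ z (Fin.last n) := (hz _ _ i.castSucc_lt_last).1
  choose y hy using fun i ↦ Fin.exists_succAbove_eq (ne_last i)
  refine ⟨z (Fin.last n), y, ?_⟩
  rw [← Fin.snoc_init_self z, insertLargest, Fin.snoc_last]
  exact congrArg (Fin.snoc · _) (funext hy)

/-- The largest label may be inserted anywhere except immediately in front of another label. -/
theorem card_isShiPlacement_succ (n m : ℕ) :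
    Nat.card {z : Fin (n + 1) → Fin (m + 1) // IsShiPlacement z} =
      (m + 1 - n) * Nat.card {y : Fin n → Fin m // IsShiPlacement y} := by
  let insert (p : Σ y : {y : Fin n → Fin m // IsShiPlacement y}, ↥(range (Fin.castSucc ∘ y.1))ᶜ) :
      {z : Fin (n + 1) → Fin (m + 1) // IsShiPlacement z} :=
    ⟨insertLargest p.2.1 p.1.1, isShiPlacement_insertLargest_iff.2 ⟨p.1.2, p.2.2⟩⟩
  have insert_bijective : Function.Bijective insert := by
    constructor
    · rintro ⟨⟨y, hy⟩, ⟨e, he⟩⟩ ⟨⟨z, hz⟩, ⟨f, hf⟩⟩ h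
      obtain ⟨rfl, rfl⟩ := insertLargest_inj.1 (Subtype.ext_iff.1 h)
      rfl
    · rintro ⟨z, hz⟩
      obtain ⟨e, y, rfl⟩ := hz.exists_insertLargest_eq
      obtain ⟨hy, he⟩ := isShiPlacement_insertLargest_iff.1 hz
      exact ⟨⟨⟨y, hy⟩, ⟨e, he⟩⟩, rfl⟩
  have card_free (y : {y : Fin n → Fin m // IsShiPlacement y}) :
      Nat.card ↥(range (Fin.castSucc ∘ y.1))ᶜ = m + 1 - n := by
    rw [Nat.card_coe_set_eq, ncard_compl,
      ncard_range_of_injective ((Fin.castSucc_injective m).comp y.2.injective), Nat.card_fin,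
      Nat.card_fin]
  let _ := Fintype.ofFinite {y : Fin n → Fin m // IsShiPlacement y}
  rw [← Nat.card_eq_of_bijective _ insert_bijective, Nat.card_sigma,
    Finset.sum_congr rfl fun y _ ↦ card_free y, Finset.sum_const, smul_eq_mul, mul_comm,
    Finset.card_univ, Nat.card_eq_fintype_card]

theorem card_isShiPlacement (n d : ℕ) :
    Nat.card {y : Fin n → Fin (n + d) // IsShiPlacement y} = (d + 1) ^ n := by
  induction n with
  | zero => simp [IsShiPlacement]
  | succ n ih =>
    rw [show n + 1 + d = n + d + 1 by ring, card_isShiPlacement_succ, ih, pow_succ', add_assoc,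
      Nat.add_sub_cancel_left]

theorem natCast_zmod_inj {q a b : ℕ} (ha : a < q) (hb : b < q) : (a : ZMod q) = b ↔ a = b :=
  (CharP.natCast_injOn_Iio (ZMod q) q).eq_iff ha hb

theorem exists_one_add_natCast_eq_iff {d : ZMod (m + 2)} :
    (∃ k : Fin m, 1 + ((k : ℕ) : ZMod (m + 2)) = d) ↔ d ≠ 0 ∧ d ≠ -1 := by
  obtain ⟨v, hv, rfl⟩ : ∃ v < m + 2, (v : ZMod (m + 2)) = d :=
    ⟨d.val, d.val_lt, d.natCast_zmod_val⟩
  have eq_zero_iff : (v : ZMod (m + 2)) = 0 ↔ v = 0 := by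
    rw [← Nat.cast_zero, natCast_zmod_inj hv (by lia)]
  have neg_one_eq : (-1 : ZMod (m + 2)) = (m + 1 : ℕ) := by
    rw [neg_eq_iff_add_eq_zero, ← Nat.cast_one, ← Nat.cast_add, Nat.one_add]
    exact ZMod.natCast_self (m + 2)
  have one_add_eq_iff (k : Fin m) : 1 + ((k : ℕ) : ZMod (m + 2)) = v ↔ 1 + (k : ℕ) = v := by
    rw [← Nat.cast_one, ← Nat.cast_add, natCast_zmod_inj (by lia) hv]
  simp only [one_add_eq_iff, ne_eq, eq_zero_iff, neg_one_eq,
    natCast_zmod_inj hv (Nat.lt_succ_self _)]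
  constructor
  · rintro ⟨k, hk⟩
    lia
  · intro hv'
    exact ⟨⟨v - 1, by lia⟩, by dsimp only; lia⟩

/-- The circle `ZMod (m + 2)` with the label `0` placed at `a` and the label `i + 1` placed on the
place `y i` of the line that remains when `a` and `a - 1` are removed from the circle. -/
def placeOnCircle (a : ZMod (m + 2)) (y : Fin n → Fin m) : Fin (n + 1) → ZMod (m + 2) :=
  Fin.cons a fun i ↦ a + (1 + (y i : ℕ))

theorem placeOnCircle_inj {a b : ZMod (m + 2)} {y z : Fin n → Fin m} :
    placeOnCircle a y = placeOnCircle b z ↔ a = b ∧ y = z := by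
  refine ⟨fun h ↦ ?_, fun h ↦ by rw [h.1, h.2]⟩
  obtain ⟨rfl, add_eq⟩ := Fin.cons_inj.1 h
  refine ⟨rfl, funext fun i ↦ Fin.ext ?_⟩
  have natCast_eq : ((y i : ℕ) : ZMod (m + 2)) = (z i : ℕ) :=
    add_left_cancel (add_left_cancel (congrFun add_eq i))
  exact (natCast_zmod_inj (by lia) (by lia)).1 natCast_eq

theorem placeOnCircle_mem_complement_shi_iff {a : ZMod (m + 2)} {y : Fin n → Fin m} :
    placeOnCircle a y ∈ complement ((shi (n + 1)).map (IntegralForm.eval (ZMod (m + 2)))) ↔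
      IsShiPlacement y := by
  have zero_succ (k : Fin m) :
      a - (a + (1 + (k : ℕ))) ≠ 0 ∧ a - (a + (1 + (k : ℕ))) ≠ 1 := by
    rw [sub_add_cancel_left, Ne, Ne, neg_eq_zero, neg_eq_iff_eq_neg]
    exact exists_one_add_natCast_eq_iff.1 ⟨k, rfl⟩
  have succ_succ (k l : Fin m) :
      (a + (1 + (k : ℕ)) - (a + (1 + (l : ℕ))) ≠ 0 ∧ a + (1 + (k : ℕ)) - (a + (1 + (l : ℕ))) ≠ 1) ↔
        k ≠ l ∧ (k : ℕ) ≠ l + 1 := by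
    rw [add_sub_add_left_eq_sub, add_sub_add_left_eq_sub, Ne, Ne, sub_eq_zero, sub_eq_iff_eq_add',
      ← Nat.cast_succ, natCast_zmod_inj (by lia) (by lia), natCast_zmod_inj (by lia) (by lia),
      Fin.val_inj]
  simp only [complement_shi, mem_ofPred_eq, placeOnCircle, IsShiPlacement,
    Fin.forall_fin_succ (n := n), Fin.cons_zero, Fin.cons_succ, succ_succ,
    Fin.succ_lt_succ_iff, Fin.not_lt_zero, false_imp_iff, true_and]
  exact and_iff_right fun i _ ↦ zero_succ (y i)

theorem exists_placeOnCircle_eq {x : Fin (n + 1) → ZMod (m + 2)}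
    (hx : x ∈ complement ((shi (n + 1)).map (IntegralForm.eval (ZMod (m + 2))))) :
    ∃ a, ∃ y : Fin n → Fin m, placeOnCircle a y = x := by
  rw [complement_shi] at hx
  have exists_place (i : Fin n) : ∃ k : Fin m, 1 + ((k : ℕ) : ZMod (m + 2)) = x i.succ - x 0 := by
    obtain ⟨ne_zero, ne_one⟩ := hx 0 i.succ i.succ_pos
    rw [exists_one_add_natCast_eq_iff, ← neg_sub, Ne, Ne, neg_inj, neg_eq_zero]
    exact ⟨ne_zero, ne_one⟩
  choose y hy using exists_place
  refine ⟨x 0, y, ?_⟩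
  simp only [placeOnCircle, hy, add_sub_cancel]
  exact Fin.cons_self_tail x

theorem ncard_complement_shi (n m : ℕ) :
    (complement ((shi (n + 1)).map (IntegralForm.eval (ZMod (m + 2))))).ncard =
      (m + 2) * Nat.card {y : Fin n → Fin m // IsShiPlacement y} := by
  have image_eq : (fun p : ZMod (m + 2) × (Fin n → Fin m) ↦ placeOnCircle p.1 p.2) ''
      (univ ×ˢ {y | IsShiPlacement y}) =
        complement ((shi (n + 1)).map (IntegralForm.eval (ZMod (m + 2)))) := by
    ext x
    constructor
    · rintro ⟨⟨a, y⟩, ⟨-, hy⟩, rfl⟩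
      exact placeOnCircle_mem_complement_shi_iff.2 hy
    · intro hx
      obtain ⟨a, y, rfl⟩ := exists_placeOnCircle_eq hx
      exact ⟨(a, y), ⟨mem_univ a, placeOnCircle_mem_complement_shi_iff.1 hx⟩, rfl⟩
  rw [← image_eq, ncard_image_of_injective, ncard_prod, ncard_univ, Nat.card_zmod]
  · rfl
  · exact fun p q h ↦ Prod.ext_iff.2 (placeOnCircle_inj.1 h)

theorem isCharPoly_shi (n : ℕ) :
    IntegralForm.IsCharPoly (shi (n + 1)) (X * (X - C (n + 1 : ℤ)) ^ n) := by
  filter_upwards [eventually_ge_atTop (n + 2)] with p hp _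
  obtain ⟨d, rfl⟩ := Nat.exists_eq_add_of_le' hp
  rw [show d + (n + 2) = n + d + 2 by ring, ncard_complement_shi, card_isShiPlacement]
  simp only [eval_mul, eval_pow, eval_sub, eval_X, eval_C]
  push_cast
  ring

end Shi

end HyperplaneArrangement

open HyperplaneArrangement in
/-- The Shi arrangement Sₙ (hyperplanes xᵢ - xⱼ = 0 and xᵢ - xⱼ = 1 for i < j)
dissects ℝⁿ into (n+1)^(n-1) regions (connected components of the complement). -/
theorem shi_arrangement_regions (n : ℕ) (hn : 1 ≤ n) :
    Nat.card (ConnectedComponents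
      {x : Fin n → ℝ // ∀ i j : Fin n, i < j → x i - x j ≠ 0 ∧ x i - x j ≠ 1}) =
    (n + 1) ^ (n - 1) := by
  obtain ⟨n, rfl⟩ := Nat.exists_eq_add_of_le' hn
  have regionCount_shi := (isCharPoly_shi n).regionCount_eq
  rw [regionCount, complement_shi] at regionCount_shi
  zify
  refine regionCount_shi.trans ?_
  simp only [eval_mul, eval_pow, eval_sub, eval_X, eval_C]
  calc (-1) ^ (n + 1) * (-1 * (-1 - ((n : ℤ) + 1)) ^ n) = (-1 * (-1 - ((n : ℤ) + 1))) ^ n := by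
        rw [mul_pow]
        ring
    _ = ((n + 1 : ℕ) + 1) ^ (n + 1 - 1) := by
        push_cast
        ring
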